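/- arXiv:2406.01350 — 4 statements merged into one kernel-verified Lean document; each statement's English description precedes it below -/
import Mathlib

section
/- On three qubits, no list of at most two CNOT gates has composition equal to the cyclic-shift permutation gate x ↦ x ∘ c, where c : Fin 3 → Fin 3 is the 3-cycle sending j to j+1 (mod 3). -/
/-- The CNOT gate with control `a` and target `b` acting on computational
basis states of an `n`-qubit system. -/
def CNOT {n : ℕ} (a b : Fin n) (x : Fin n → Bool) : Fin n → Bool :=
  fun j => if j = b then xor (x a) (x b) else x j

/-- The composition of a list of CNOT gates, applied in order. -/
def circuit {n : ℕ} (L : List (Fin n × Fin n)) (x : Fin n → Bool) : Fin n → Bool :=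
  L.foldl (fun y g => CNOT g.1 g.2 y) x

section

variable {n : ℕ} {L : List (Fin n × Fin n)} {f : Fin n → Fin n} {j : Fin n}

theorem CNOT_apply_of_ne {a b : Fin n} (hj : j ≠ b) (x : Fin n → Bool) : CNOT a b x j = x j :=
  if_neg hj

theorem circuit_cons (g : Fin n × Fin n) (L : List (Fin n × Fin n)) (x : Fin n → Bool) :
    circuit (g :: L) x = circuit L (CNOT g.1 g.2 x) :=
  rfl

theorem circuit_apply_of_notMem_targets (hj : j ∉ L.map Prod.snd) (x : Fin n → Bool) :
    circuit L x j = x j := by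
  induction L generalizing x with
  | nil => rfl
  | cons g L ih =>
    obtain ⟨hg, hL⟩ : j ≠ g.2 ∧ j ∉ L.map Prod.snd := by
      rwa [List.map_cons, List.mem_cons, not_or] at hj
    rw [circuit_cons, ih hL, CNOT_apply_of_ne hg]

theorem apply_eq_self_of_circuit_eq_comp (h : circuit L = fun x => x ∘ f)
    (hj : j ∉ L.map Prod.snd) : f j = j := by
  have hcoord (x : Fin n → Bool) : x (f j) = x j :=
    (congrFun (congrFun h x) j).symm.trans (circuit_apply_of_notMem_targets hj x)
  simpa using hcoord fun i => decide (i = j)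

theorem no_two_cnot_cycle3_general (hlen : L.length < Finset.card {j | f j ≠ j}) :
    circuit L ≠ fun x => x ∘ f := by
  intro h
  have hmoved : ({j | f j ≠ j} : Finset (Fin n)) ⊆ (L.map Prod.snd).toFinset := by
    intro j hj
    rw [List.mem_toFinset]
    by_contra hmem
    exact (Finset.mem_filter.1 hj).2 (apply_eq_self_of_circuit_eq_comp h hmem)
  refine hlen.not_ge ?_
  calc Finset.card {j | f j ≠ j}
      ≤ (L.map Prod.snd).toFinset.card := Finset.card_le_card hmoved
    _ ≤ (L.map Prod.snd).length := List.toFinset_card_le _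
    _ = L.length := List.length_map _

end

/-- On three qubits, no list of at most two CNOT gates realizes the cyclic shift
`j ↦ j + 1 (mod 3)`. -/
theorem no_two_cnot_cycle3 (L : List (Fin 3 × Fin 3))
    (hL : ∀ g ∈ L, g.1 ≠ g.2) (hlen : L.length ≤ 2) :
    circuit L ≠ fun x => x ∘ (finRotate 3) := by
  have hcard : Finset.card {j | finRotate 3 j ≠ j} = 3 := by decide
  exact no_two_cnot_cycle3_general (by omega)
end

section
/- There are exactly 90 sequences of six CNOT gates on three qubits (each gate chosen among the six CNOT gates CNOT a b with a ≠ b in Fin 3) whose composition equals the cyclic-shift permutation gate x ↦ x ∘ c, where c is the 3-cycle sending j to j+1 (mod 3). -/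
/-!
Stripping the last gate `g` from a word composing to the cyclic shift `S` leaves a word of five
gates composing to `g ∘ S`. Relabelling the wires by a power of the shift fixes `S` and rotates the
gates; passing to the inverse transpose fixes `S`, a permutation matrix, and exchanges control and
target of every gate. These two symmetries act transitively on the six gates, so every last gate
occurs in equally many words, and only the words ending in `CNOT 0 1` have to be enumerated.
-/

section CNOTWords

variable {n : ℕ}

theorem CNOT_involutive {a b : Fin n} (hab : a ≠ b) : Function.Involutive (CNOT a b) := by
  intro x
  ext j
  by_cases hj : j = b
  · simp [CNOT, hab, hj]
  · simp [CNOT, hj]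

theorem CNOT_comp_eq_iff {α : Type*} {a b : Fin n} (hab : a ≠ b) {f g : α → Fin n → Bool} :
    CNOT a b ∘ f = g ↔ f = CNOT a b ∘ g := by
  have hinv := (CNOT_involutive hab).comp_self
  constructor <;> rintro rfl <;> rw [← Function.comp_assoc, hinv, Function.id_comp]

theorem circuit_concat (L : List (Fin n × Fin n)) (g : Fin n × Fin n) :
    circuit (L.concat g) = CNOT g.1 g.2 ∘ circuit L := by
  funext x
  simp [circuit]

/-- A CNOT gate on `n` qubits, encoded as the pair of its control and its target. -/
abbrev CNOTGate (n : ℕ) := {p : Fin n × Fin n // p.1 ≠ p.2}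

/-- The number of words of `k` CNOT gates composing to the map `f` on basis states, by recursion on
the last gate `g`: as `g` is an involution, the word without `g` composes to `g ∘ f`.
This form, unlike a cardinality, can be evaluated; `card_cnotWords_eq` identifies the two. -/
def cnotWordCount : ℕ → ((Fin n → Bool) → Fin n → Bool) → ℕ
  | 0, f => if f = id then 1 else 0
  | k + 1, f => ∑ g : CNOTGate n, cnotWordCount k (CNOT g.1.1 g.1.2 ∘ f)

theorem circuit_snoc_eq_iff {k : ℕ} (t : Fin k → CNOTGate n) (g : CNOTGate n)
    (f : (Fin n → Bool) → Fin n → Bool) :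
    circuit ((List.ofFn (Fin.snoc t g : Fin (k + 1) → CNOTGate n)).map Subtype.val) = f ↔
      circuit ((List.ofFn t).map Subtype.val) = CNOT g.1.1 g.1.2 ∘ f := by
  simp only [List.ofFn_succ', Fin.snoc_castSucc, Fin.snoc_last, List.map_concat, circuit_concat,
    CNOT_comp_eq_iff g.2]

theorem card_cnotWords_succ (k : ℕ) (f : (Fin n → Bool) → Fin n → Bool) :
    Nat.card {t : Fin (k + 1) → CNOTGate n // circuit ((List.ofFn t).map Subtype.val) = f} =
      ∑ g : CNOTGate n, Nat.card {t : Fin k → CNOTGate n //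
        circuit ((List.ofFn t).map Subtype.val) = CNOT g.1.1 g.1.2 ∘ f} := by
  rw [← Nat.card_sigma]
  exact Nat.card_congr <| .symm <| (Equiv.subtypeProdEquivSigmaSubtype _).symm.trans <|
    (Fin.snocEquiv fun _ => CNOTGate n).subtypeEquiv fun p => (circuit_snoc_eq_iff p.2 p.1 f).symm

theorem card_cnotWords_eq (k : ℕ) (f : (Fin n → Bool) → Fin n → Bool) :
    Nat.card {t : Fin k → CNOTGate n // circuit ((List.ofFn t).map Subtype.val) = f} =
      cnotWordCount k f := by
  induction k generalizing f with
  | zero =>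
    have hnil : circuit ([] : List (Fin n × Fin n)) = id := rfl
    simp only [cnotWordCount, List.ofFn_zero, List.map_nil, hnil, @eq_comm _ id f]
    split_ifs with hf <;> simp [hf]
  | succ k ih => simp only [card_cnotWords_succ, ih, cnotWordCount]

theorem cnotWordCount_congr_of_simulation
    {R : ((Fin n → Bool) → Fin n → Bool) → ((Fin n → Bool) → Fin n → Bool) → Prop}
    (e : CNOTGate n ≃ CNOTGate n) (hid : ∀ {f f'}, R f f' → (f = id ↔ f' = id))
    (hstep : ∀ {f f'} (g : CNOTGate n), R f f' →
      R (CNOT g.1.1 g.1.2 ∘ f) (CNOT (e g).1.1 (e g).1.2 ∘ f'))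
    (k : ℕ) {f f' : (Fin n → Bool) → Fin n → Bool} (h : R f f') :
    cnotWordCount k f = cnotWordCount k f' := by
  induction k generalizing f f' with
  | zero => simp only [cnotWordCount, hid h]
  | succ k ih =>
    rw [cnotWordCount, cnotWordCount,
      ← e.sum_comp fun g => cnotWordCount k (CNOT g.1.1 g.1.2 ∘ f')]
    exact Finset.sum_congr rfl fun g _ => ih (hstep g h)

/-- The map `f` with its wires permuted: wire `j` of `f` becomes wire `π j`. -/
def permuteWires (π : Equiv.Perm (Fin n)) (f : (Fin n → Bool) → Fin n → Bool) :
    (Fin n → Bool) → Fin n → Bool :=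
  fun x => f (x ∘ π) ∘ π.symm

theorem permuteWires_injective (π : Equiv.Perm (Fin n)) : Function.Injective (permuteWires π) := by
  refine Function.LeftInverse.injective (g := permuteWires π.symm) fun f => ?_
  funext x j
  simp [permuteWires, Function.comp_assoc]

theorem permuteWires_id (π : Equiv.Perm (Fin n)) : permuteWires π id = id := by
  funext x j
  simp [permuteWires]

theorem permuteWires_CNOT_comp (π : Equiv.Perm (Fin n)) (a b : Fin n)
    (f : (Fin n → Bool) → Fin n → Bool) :
    permuteWires π (CNOT a b ∘ f) = CNOT (π a) (π b) ∘ permuteWires π f := by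
  funext x j
  simp [permuteWires, CNOT, Equiv.symm_apply_eq]

theorem permuteWires_comp_perm_of_commute {π σ : Equiv.Perm (Fin n)} (h : Commute π σ) :
    permuteWires π (fun x => x ∘ σ) = fun x => x ∘ σ := by
  funext x j
  have hj := DFunLike.congr_fun h.eq (π.symm j)
  simp only [Equiv.Perm.mul_apply, Equiv.apply_symm_apply] at hj
  simp [permuteWires, hj]

theorem cnotWordCount_permuteWires (π : Equiv.Perm (Fin n)) (k : ℕ)
    (f : (Fin n → Bool) → Fin n → Bool) :
    cnotWordCount k (permuteWires π f) = cnotWordCount k f := by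
  let e : CNOTGate n ≃ CNOTGate n :=
    (π.prodCongr π).subtypeEquiv fun p => (π.injective.ne_iff (x := p.1) (y := p.2)).symm
  refine (cnotWordCount_congr_of_simulation (R := (permuteWires π · = ·)) e ?_ ?_ k rfl).symm
  · rintro f _ rfl
    rw [← (permuteWires_injective π).eq_iff, permuteWires_id]
  · rintro f _ g rfl
    exact permuteWires_CNOT_comp π g.1.1 g.1.2 f

/-- A basis state as a vector over the field with two elements, where CNOT gates are linear and
basis states can be paired by the dot product. -/
def bitVector (x : Fin n → Bool) : Fin n → ZMod 2 :=
  fun j => if x j then 1 else 0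

theorem bitVector_bijective : Function.Bijective (bitVector (n := n)) :=
  have hbit : Function.Bijective fun c : Bool => if c then (1 : ZMod 2) else 0 := by decide
  Function.Bijective.piMap fun _ : Fin n => hbit

theorem bitVector_CNOT (a b : Fin n) (x : Fin n → Bool) :
    bitVector (CNOT a b x) = bitVector x + Pi.single b (bitVector x a) := by
  funext j
  obtain rfl | hj := eq_or_ne j b
  · have hxor : ∀ p q : Bool,
        (if xor p q then 1 else 0 : ZMod 2) = (if q then 1 else 0) + if p then 1 else 0 := by
      decide
    simpa only [bitVector, CNOT, if_true, Pi.add_apply, Pi.single_eq_same] using hxor (x a) (x j)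
  · simp [bitVector, CNOT, hj]

/-- `f` and `f'` are contragredient if together they preserve the dot product over the field
with two elements; for linear `f` this says that `f'` is the inverse transpose of `f`. -/
def Contragredient (f f' : (Fin n → Bool) → Fin n → Bool) : Prop :=
  ∀ x y, bitVector (f x) ⬝ᵥ bitVector (f' y) = bitVector x ⬝ᵥ bitVector y

theorem Contragredient.symm {f f' : (Fin n → Bool) → Fin n → Bool} (h : Contragredient f f') :
    Contragredient f' f := fun x y => by
  rw [dotProduct_comm, h, dotProduct_comm]

theorem Contragredient.eq_id {f : (Fin n → Bool) → Fin n → Bool}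
    (h : Contragredient id f) : f = id := by
  funext y
  refine bitVector_bijective.injective (dotProduct_eq _ _ fun u => ?_)
  obtain ⟨x, rfl⟩ := bitVector_bijective.surjective u
  simpa only [dotProduct_comm, id] using h x y

theorem Contragredient.comp {f f' g g' : (Fin n → Bool) → Fin n → Bool}
    (hg : Contragredient g g') (hf : Contragredient f f') :
    Contragredient (g ∘ f) (g' ∘ f') := fun x y =>
  (hg (f x) (f' y)).trans (hf x y)

theorem contragredient_CNOT {a b : Fin n} (hab : a ≠ b) :
    Contragredient (CNOT a b) (CNOT b a) := by
  intro x y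
  simp only [bitVector_CNOT, add_dotProduct, dotProduct_add, single_dotProduct, dotProduct_single,
    Pi.add_apply, Pi.single_eq_of_ne hab, add_zero]
  rw [add_assoc, CharTwo.add_self_eq_zero, add_zero]

theorem contragredient_comp_perm (σ : Equiv.Perm (Fin n)) :
    Contragredient (fun x => x ∘ σ) (fun x => x ∘ σ) := fun x y =>
  comp_equiv_dotProduct_comp_equiv (bitVector x) (bitVector y) σ

theorem Contragredient.cnotWordCount_eq (k : ℕ) {f f' : (Fin n → Bool) → Fin n → Bool}
    (h : Contragredient f f') : cnotWordCount k f = cnotWordCount k f' := by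
  let e : CNOTGate n ≃ CNOTGate n := (Equiv.prodComm _ _).subtypeEquiv fun _ => ne_comm
  refine cnotWordCount_congr_of_simulation e ?_ ?_ k h
  · intro f f' h
    constructor <;> rintro rfl
    exacts [h.eq_id, h.symm.eq_id]
  · exact fun g h => (contragredient_CNOT g.2).comp h

theorem cnotWordCount_CNOT_comp_perm_map (k : ℕ) {π σ : Equiv.Perm (Fin n)} (h : Commute π σ)
    (a b : Fin n) :
    cnotWordCount k (CNOT (π a) (π b) ∘ fun x => x ∘ σ) =
      cnotWordCount k (CNOT a b ∘ fun x => x ∘ σ) := by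
  rw [← cnotWordCount_permuteWires π k (CNOT a b ∘ _), permuteWires_CNOT_comp,
    permuteWires_comp_perm_of_commute h]

theorem cnotWordCount_CNOT_comp_perm_swap (k : ℕ) (σ : Equiv.Perm (Fin n)) {a b : Fin n}
    (hab : a ≠ b) :
    cnotWordCount k (CNOT b a ∘ fun x => x ∘ σ) =
      cnotWordCount k (CNOT a b ∘ fun x => x ∘ σ) :=
  ((contragredient_CNOT hab.symm).comp (contragredient_comp_perm σ)).cnotWordCount_eq k

end CNOTWords

theorem exists_finRotate_three_pow_eq {a b : Fin 3} (hab : a ≠ b) :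
    ∃ i < 3, (a = (finRotate 3 ^ i) 0 ∧ b = (finRotate 3 ^ i) 1) ∨
      (a = (finRotate 3 ^ i) 1 ∧ b = (finRotate 3 ^ i) 0) := by
  revert a b
  decide

theorem cnotWordCount_CNOT_comp_finRotate_three (k : ℕ) {a b : Fin 3} (hab : a ≠ b) :
    cnotWordCount k (CNOT a b ∘ fun x => x ∘ finRotate 3) =
      cnotWordCount k (CNOT 0 1 ∘ fun x => x ∘ finRotate 3) := by
  obtain ⟨i, -, ⟨rfl, rfl⟩ | ⟨rfl, rfl⟩⟩ := exists_finRotate_three_pow_eq hab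
  · exact cnotWordCount_CNOT_comp_perm_map k (Commute.pow_self _ i) 0 1
  · rw [cnotWordCount_CNOT_comp_perm_map k (Commute.pow_self _ i),
      cnotWordCount_CNOT_comp_perm_swap k _ zero_ne_one]

theorem cnotWordCount_succ_finRotate_three (k : ℕ) :
    cnotWordCount (k + 1) (fun x => x ∘ finRotate 3) =
      6 * cnotWordCount k (CNOT 0 1 ∘ fun x => x ∘ finRotate 3) := by
  have hgates : Fintype.card (CNOTGate 3) = 6 := by decide
  simp only [cnotWordCount, fun g : CNOTGate 3 => cnotWordCount_CNOT_comp_finRotate_three k g.2,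
    Finset.sum_const, Finset.card_univ, hgates, smul_eq_mul]

theorem cnotWordCount_five_CNOT_comp_finRotate_three :
    cnotWordCount 5 (CNOT 0 1 ∘ fun x => x ∘ finRotate 3) = 15 := by
  decide +kernel

/-- There are exactly 90 sequences (6-tuples) of CNOT gates on three qubits whose
composition equals the cyclic-shift permutation gate for `j ↦ j + 1 (mod 3)`. -/
theorem card_six_cnot_sequences_cycle3 :
    Fintype.card {t : Fin 6 → {p : Fin 3 × Fin 3 // p.1 ≠ p.2} //
      circuit ((List.ofFn t).map Subtype.val) = fun x => x ∘ (finRotate 3)} = 90 := by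
  rw [← Nat.card_eq_fintype_card, card_cnotWords_eq, cnotWordCount_succ_finRotate_three,
    cnotWordCount_five_CNOT_comp_finRotate_three]
end

section
/- All n-cycles have the same CNOT cost: for any two permutations σ and σ' of Fin n that are both cycles of length n (i.e. each is a cycle whose support is all of Fin n), the least k such that some list of k CNOT gates realizes the permutation gate of σ equals the least k such that some list of k CNOT gates realizes the permutation gate of σ'. -/
section Relabelling

variable {m n : ℕ} {f : Fin m → Fin n}

theorem CNOT_comp_of_injective (hf : f.Injective) (a b : Fin m) (x : Fin n → Bool) :
    CNOT (f a) (f b) x ∘ f = CNOT a b (x ∘ f) := by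
  funext j
  simp [CNOT, hf.eq_iff]

theorem circuit_map_comp_of_injective (hf : f.Injective) (L : List (Fin m × Fin m))
    (x : Fin n → Bool) :
    circuit (L.map (Prod.map f f)) x ∘ f = circuit L (x ∘ f) := by
  rw [circuit, List.foldl_map]
  exact (List.foldl_hom (· ∘ f) fun y g => (CNOT_comp_of_injective hf g.1 g.2 y).symm).symm

end Relabelling

section Cost

variable {n : ℕ} {σ τ : Equiv.Perm (Fin n)} {L : List (Fin n × Fin n)}

/-- The lengths of the CNOT circuits that realize the permutation gate of `σ`; a pair in the list
is a gate only if its control differs from its target. -/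
def circuitLengths (σ : Equiv.Perm (Fin n)) : Set ℕ :=
  {k | ∃ L : List (Fin n × Fin n), (∀ g ∈ L, g.1 ≠ g.2) ∧ L.length = k ∧
    circuit L = fun x => x ∘ σ}

/-- The CNOT cost of `σ`: the least length of a CNOT circuit realizing its permutation gate. The
infimum is over a nonempty set, since a transposition is a composite of three CNOT gates. -/
noncomputable def cnotCost (σ : Equiv.Perm (Fin n)) : ℕ :=
  sInf (circuitLengths σ)

theorem circuit_map_eq_comp_conj (π : Equiv.Perm (Fin n)) (hL : circuit L = fun x => x ∘ σ) :
    circuit (L.map (Prod.map π π)) = fun x => x ∘ (π * σ * π⁻¹ : Equiv.Perm (Fin n)) := by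
  funext x
  calc circuit (L.map (Prod.map π π)) x
      = (circuit (L.map (Prod.map π π)) x ∘ π) ∘ π.symm := by
        rw [Function.comp_assoc, π.self_comp_symm, Function.comp_id]
    _ = (x ∘ π) ∘ σ ∘ π.symm := by
        rw [circuit_map_comp_of_injective π.injective, hL, Function.comp_assoc]

theorem circuitLengths_subset_conj (π σ : Equiv.Perm (Fin n)) :
    circuitLengths σ ⊆ circuitLengths (π * σ * π⁻¹) := by
  rintro k ⟨L, hne, hlen, hL⟩
  refine ⟨L.map (Prod.map π π), ?_, by rw [List.length_map, hlen], circuit_map_eq_comp_conj π hL⟩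
  exact List.forall_mem_map.2 fun g hg => π.injective.ne (hne g hg)

theorem circuitLengths_subset_of_isConj (h : IsConj σ τ) :
    circuitLengths σ ⊆ circuitLengths τ := by
  obtain ⟨π, rfl⟩ := isConj_iff.1 h
  exact circuitLengths_subset_conj π σ

theorem ncycles_same_cnot_cost_general (h : IsConj σ τ) : cnotCost σ = cnotCost τ :=
  congrArg sInf <|
    (circuitLengths_subset_of_isConj h).antisymm (circuitLengths_subset_of_isConj h.symm)

end Cost

/-- All `n`-cycles have the same minimal CNOT cost. -/
theorem ncycles_same_cnot_cost {n : ℕ} (σ σ' : Equiv.Perm (Fin n))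
    (hσ : σ.IsCycle ∧ σ.support = Finset.univ)
    (hσ' : σ'.IsCycle ∧ σ'.support = Finset.univ) :
    sInf {k : ℕ | ∃ L : List (Fin n × Fin n), (∀ g ∈ L, g.1 ≠ g.2) ∧ L.length = k ∧
        circuit L = fun x => x ∘ σ} =
    sInf {k : ℕ | ∃ L : List (Fin n × Fin n), (∀ g ∈ L, g.1 ≠ g.2) ∧ L.length = k ∧
        circuit L = fun x => x ∘ σ'} :=
  ncycles_same_cnot_cost_general (hσ.1.isConj hσ'.1 (by rw [hσ.2, hσ'.2]))
end

section
/- Every reducible permutation is cheap: for n ≥ 2 and any permutation σ of Fin n that is not an n-cycle (i.e. it is not the case that σ is a cycle with support all of Fin n), there exists a list of at most 3(n-2) CNOT gates on n qubits whose composition equals the permutation gate x ↦ x ∘ σ. -/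
/-!
A `k`-cycle is a product of `k - 1` swaps, so a permutation of `n` points with `c` cycles, fixed
points included, is a product of `n - c` swaps. In terms of the support and the cycle type, which
both ignore fixed points, `n - c` is `σ.support.card - σ.cycleType.card`. A swap costs three CNOT
gates, and a permutation of at least two points that is not an `n`-cycle has `c ≥ 2`.
-/

section SwapFactorization

open Equiv Equiv.Perm

variable {α : Type*} [DecidableEq α]

theorem isSwap_of_mem_zipWith_swap_tail {l : List α} (hl : l.Nodup) {g : Perm α}
    (hg : g ∈ List.zipWith swap l l.tail) : g.IsSwap := by
  obtain ⟨i, hi, rfl⟩ := List.mem_iff_getElem.mp hg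
  rw [List.length_zipWith, List.length_tail] at hi
  rw [List.getElem_zipWith, List.getElem_tail]
  exact ⟨_, _, by rw [Ne, hl.getElem_inj_iff]; omega, rfl⟩

variable [Fintype α]

theorem exists_isSwap_list_prod_eq_of_isCycle {σ : Perm α} (hσ : σ.IsCycle) :
    ∃ l : List (Perm α), (∀ g ∈ l, g.IsSwap) ∧ l.length + 1 = σ.support.card ∧ l.prod = σ := by
  obtain ⟨a, ha⟩ := hσ.nonempty_support
  have hcycle : σ.cycleOf a = σ := hσ.cycleOf_eq (mem_support.mp ha)
  -- `List.formPerm` unfolds to the product of the swaps of consecutive entries.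
  refine ⟨List.zipWith swap (σ.toList a) (σ.toList a).tail,
    fun g => isSwap_of_mem_zipWith_swap_tail (nodup_toList σ a), ?_,
    (formPerm_toList σ a).trans hcycle⟩
  have hpos := length_toList_pos_of_mem_support σ a ha
  rw [length_toList, hcycle] at hpos
  rw [List.length_zipWith, List.length_tail, length_toList, hcycle]
  omega

theorem exists_isSwap_list_prod_eq (σ : Perm α) :
    ∃ l : List (Perm α), (∀ g ∈ l, g.IsSwap) ∧
      l.length + σ.cycleType.card = σ.support.card ∧ l.prod = σ := by
  induction σ using cycle_induction_on with
  | base_one => exact ⟨[], by simp⟩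
  | base_cycles σ hσ =>
    simpa only [card_cycleType_eq_one.mpr hσ] using exists_isSwap_list_prod_eq_of_isCycle hσ
  | induction_disjoint σ τ hdisj _ ihσ ihτ =>
    obtain ⟨l, hl, hlen, rfl⟩ := ihσ
    obtain ⟨m, hm, hmlen, rfl⟩ := ihτ
    refine ⟨l ++ m, List.forall_mem_append.mpr ⟨hl, hm⟩, ?_, List.prod_append⟩
    rw [List.length_append, hdisj.cycleType_mul, Multiset.card_add, hdisj.card_support_mul]
    omega

theorem card_support_sub_card_cycleType_le {σ : Perm α}
    (hσ : ¬(σ.IsCycle ∧ σ.support = Finset.univ)) :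
    σ.support.card - σ.cycleType.card ≤ Fintype.card α - 2 := by
  by_cases hcycle : σ.IsCycle
  · have hlt : σ.support.card < Fintype.card α :=
      (Finset.card_lt_iff_ne_univ _).mpr fun hsupp => hσ ⟨hcycle, hsupp⟩
    rw [card_cycleType_eq_one.mpr hcycle]
    omega
  · rcases eq_or_ne σ 1 with rfl | hne
    · simp
    · have hpos := card_cycleType_pos.mpr hne
      have hne_one := mt card_cycleType_eq_one.mp hcycle
      have hle := σ.support.card_le_univ
      omega

end SwapFactorization

/-- The CNOT circuit `L` realizes the permutation gate `x ↦ x ∘ σ`, each of its gates having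
distinct control and target. -/
def Realizes {n : ℕ} (L : List (Fin n × Fin n)) (σ : Equiv.Perm (Fin n)) : Prop :=
  (∀ g ∈ L, g.1 ≠ g.2) ∧ circuit L = fun x => x ∘ σ

namespace Realizes

variable {n : ℕ}

theorem nil : Realizes [] (1 : Equiv.Perm (Fin n)) :=
  ⟨List.forall_mem_nil _, rfl⟩

theorem append {L M : List (Fin n × Fin n)} {σ τ : Equiv.Perm (Fin n)}
    (hL : Realizes L σ) (hM : Realizes M τ) : Realizes (L ++ M) (σ * τ) := by
  refine ⟨List.forall_mem_append.mpr ⟨hL.1, hM.1⟩, funext fun x => ?_⟩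
  calc circuit (L ++ M) x = circuit M (circuit L x) := List.foldl_append
    _ = (x ∘ σ) ∘ τ := by rw [hL.2, hM.2]

theorem swap {a b : Fin n} (hab : a ≠ b) :
    Realizes [(a, b), (b, a), (a, b)] (Equiv.swap a b) := by
  refine ⟨by simp [hab, hab.symm], funext₂ fun x j => ?_⟩
  rcases eq_or_ne j a with rfl | hja
  · simp [circuit, CNOT, hab, bne_comm (a := x b)]
  · rcases eq_or_ne j b with rfl | hjb
    · simp [circuit, CNOT, hab, hja]
    · simp [circuit, CNOT, hja, hjb, Equiv.swap_apply_of_ne_of_ne]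

end Realizes

theorem exists_realizes_prod_of_isSwap {n : ℕ} {l : List (Equiv.Perm (Fin n))}
    (hl : ∀ g ∈ l, g.IsSwap) :
    ∃ L : List (Fin n × Fin n), L.length = 3 * l.length ∧ Realizes L l.prod := by
  induction l with
  | nil => exact ⟨[], rfl, .nil⟩
  | cons g l ih =>
    obtain ⟨⟨a, b, hab, rfl⟩, htail⟩ := List.forall_mem_cons.mp hl
    obtain ⟨L, hlen, hL⟩ := ih htail
    refine ⟨[(a, b), (b, a), (a, b)] ++ L, ?_, ?_⟩
    · simp only [List.length_append, List.length_cons, List.length_nil, hlen]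
      ring
    · rw [List.prod_cons]
      exact (Realizes.swap hab).append hL

theorem reducible_perm_cnot_le_general {n : ℕ} (σ : Equiv.Perm (Fin n)) :
    ∃ L : List (Fin n × Fin n), (∀ g ∈ L, g.1 ≠ g.2) ∧
      L.length ≤ 3 * (σ.support.card - σ.cycleType.card) ∧ circuit L = fun x => x ∘ σ := by
  obtain ⟨l, hswap, hcard, hprod⟩ := exists_isSwap_list_prod_eq σ
  obtain ⟨L, hlen, hne, hcircuit⟩ := exists_realizes_prod_of_isSwap hswap
  exact ⟨L, hne, by omega, hprod ▸ hcircuit⟩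

/-- Every reducible permutation (i.e. not an `n`-cycle) of `n ≥ 2` qubits can be
realized by at most `3(n-2)` CNOT gates. -/
theorem reducible_perm_cnot_le {n : ℕ} (hn : 2 ≤ n) (σ : Equiv.Perm (Fin n))
    (hσ : ¬(σ.IsCycle ∧ σ.support = Finset.univ)) :
    ∃ L : List (Fin n × Fin n), (∀ g ∈ L, g.1 ≠ g.2) ∧ L.length ≤ 3 * (n - 2) ∧
      circuit L = fun x => x ∘ σ := by
  obtain ⟨L, hne, hlen, hcircuit⟩ := reducible_perm_cnot_le_general σ
  have hcard : σ.support.card - σ.cycleType.card ≤ n - 2 := by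
    simpa only [Fintype.card_fin] using card_support_sub_card_cycleType_le hσ
  exact ⟨L, hne, hlen.trans (Nat.mul_le_mul_left 3 hcard), hcircuit⟩
end
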